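/- Let n ≥ 1, s > 1, q ∈ [1,∞], and p, p̄ ∈ (1,∞) with p̄ < p ≤ 2p̄ and s > n(2/p − 1/p̄). Then there is a constant C > 0 such that for all Schwartz vector fields u, v : ℝⁿ → ℝⁿ, ‖div(u ⊗ v)‖_{B^{s−1}_{p̄,q}} ≤ C ‖u‖_{B^s_{p,q}} ‖v‖_{B^s_{p,q}}, where u ⊗ v is the matrix with entries (u ⊗ v)_{jk} = u_j v_k and div(u ⊗ v) is the vector with components ∑_k ∂_{x_k}(u_j v_k). -/

import Mathlib

open MeasureTheory Real Filter
open scoped ENNReal FourierTransform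

noncomputable section

/-- `ℝⁿ` as a Euclidean space. -/
abbrev Rn (n : ℕ) : Type := EuclideanSpace ℝ (Fin n)

variable {n : ℕ}

/-- The Fourier transform of a real-valued Schwartz function, viewed as a ℂ-valued function. -/
def ftC (f : SchwartzMap (Rn n) ℝ) : Rn n → ℂ :=
  𝓕 (fun x => (f x : ℂ))

/-- `ψ₀` is a Littlewood–Paley function: an even, radial Schwartz function whose Fourier
transform is nonnegative, supported in the annulus `{ξ : 1/2 < ‖ξ‖ < 2}`, and satisfies
`∑_{j ∈ ℤ} ψ̂₀(2^{-j} ξ) = 1` for `ξ ≠ 0`. -/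
structure IsLPF (n : ℕ) (ψ₀ : SchwartzMap (Rn n) ℝ) : Prop where
  even : ∀ x : Rn n, ψ₀ (-x) = ψ₀ x
  radial : ∀ x y : Rn n, ‖x‖ = ‖y‖ → ψ₀ x = ψ₀ y
  ft_im : ∀ ξ : Rn n, (ftC ψ₀ ξ).im = 0
  ft_nonneg : ∀ ξ : Rn n, 0 ≤ (ftC ψ₀ ξ).re
  ft_supp : ∀ ξ : Rn n, ftC ψ₀ ξ ≠ 0 → 1/2 < ‖ξ‖ ∧ ‖ξ‖ < 2
  ft_sum : ∀ ξ : Rn n, ξ ≠ 0 → HasSum (fun j : ℤ => ftC ψ₀ ((2:ℝ) ^ (-j) • ξ)) 1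

/-- The Littlewood–Paley kernel `ψ_j(x) = 2^{jn} ψ₀(2^j x)`, whose Fourier transform is
`ψ̂₀(2^{-j} ξ)`. -/
def lpKernel (ψ₀ : SchwartzMap (Rn n) ℝ) (j : ℤ) (x : Rn n) : ℝ :=
  (2:ℝ) ^ (j * (n:ℤ)) * ψ₀ ((2:ℝ) ^ j • x)

/-- The Littlewood–Paley projection `Δ_j f = ψ_j ∗ f`. -/
def lpProj (ψ₀ : SchwartzMap (Rn n) ℝ) (j : ℤ) (f : Rn n → ℝ) : Rn n → ℝ :=
  MeasureTheory.convolution (lpKernel ψ₀ j) f (ContinuousLinearMap.mul ℝ ℝ) volume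

/-- `S_j f = ∑_{m ≤ j} Δ_m f`, the low-frequency cutoff; this is the L² function whose
Fourier transform is `(∑_{m ≤ j} ψ̂₀(2^{-m} ξ)) f̂(ξ)`. -/
def lowProj (ψ₀ : SchwartzMap (Rn n) ℝ) (j : ℤ) (f : Rn n → ℝ) (x : Rn n) : ℝ :=
  ∑' m : ℤ, if m ≤ j then lpProj ψ₀ m f x else 0

/-- `Ψ` is the low-frequency piece of the Littlewood–Paley decomposition:
`Ψ̂ = 1 − ∑_{k ≥ 0} ψ̂_k`. -/
def IsLowPiece (ψ₀ Ψ : SchwartzMap (Rn n) ℝ) : Prop :=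
  ∀ ξ : Rn n, ftC Ψ ξ = 1 - ∑' k : ℕ, ftC ψ₀ ((2:ℝ) ^ (-(k:ℤ)) • ξ)

/-- The inhomogeneous Besov norm `‖f‖_{B^s_{p,q}}`, valued in `[0,∞]`:
`‖Ψ∗f‖_{L^p} + (∑_{j ≥ 0} (2^{js} ‖Δ_j f‖_{L^p})^q)^{1/q}`, with the supremum over `j`
replacing the `ℓ^q` sum when `q = ∞`. -/
def besovNorm (ψ₀ Ψ : SchwartzMap (Rn n) ℝ) (s : ℝ) (p q : ℝ≥0∞) (f : Rn n → ℝ) : ℝ≥0∞ :=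
  eLpNorm (MeasureTheory.convolution (fun x => Ψ x) f (ContinuousLinearMap.mul ℝ ℝ) volume)
      p volume +
    (if q = ∞ then
      ⨆ j : ℕ, ENNReal.ofReal ((2:ℝ) ^ ((j:ℝ) * s)) * eLpNorm (lpProj ψ₀ (j:ℤ) f) p volume
    else
      (∑' j : ℕ, (ENNReal.ofReal ((2:ℝ) ^ ((j:ℝ) * s)) *
        eLpNorm (lpProj ψ₀ (j:ℤ) f) p volume) ^ q.toReal) ^ (1 / q.toReal))

/-- The heat semigroup `e^{tΔ} f = h_t ∗ f` with `h_t(x) = (4πt)^{-n/2} e^{-‖x‖²/(4t)}`. -/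
def heatOp (n : ℕ) (t : ℝ) (f : Rn n → ℝ) : Rn n → ℝ :=
  MeasureTheory.convolution
    (fun x : Rn n => (4 * π * t) ^ (-(n:ℝ)/2) * Real.exp (-‖x‖^2 / (4*t))) f
    (ContinuousLinearMap.mul ℝ ℝ) volume

/-- The partial derivative `∂_{x_i} f`. -/
def pderiv' (i : Fin n) (f : Rn n → ℝ) (x : Rn n) : ℝ :=
  fderiv ℝ f x (EuclideanSpace.single i 1)

/-- The Laplacian `Δf = ∑ᵢ ∂²_{x_i} f`. -/
def lapl (f : Rn n → ℝ) (x : Rn n) : ℝ :=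
  ∑ i : Fin n, pderiv' i (pderiv' i f) x

open SchwartzMap LineDeriv

def toC (f : SchwartzMap (Rn n) ℝ) : SchwartzMap (Rn n) ℂ := postcompCLM Complex.ofRealCLM f

lemma toC_apply (f : SchwartzMap (Rn n) ℝ) (x : Rn n) : toC f x = (f x : ℂ) := rfl

def ft (f : SchwartzMap (Rn n) ℝ) : SchwartzMap (Rn n) ℂ := 𝓕 (toC f)

lemma ft_eq (f : SchwartzMap (Rn n) ℝ) (ξ : Rn n) : ft f ξ = ftC f ξ := rfl

lemma ft_inj {f g : SchwartzMap (Rn n) ℝ} (h : ∀ ξ, ft f ξ = ft g ξ) : f = g := by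
  have h1 : ft f = ft g := by ext ξ; exact h ξ
  have h2 : toC f = toC g := by
    have := congrArg (fun F : SchwartzMap (Rn n) ℂ => 𝓕⁻ F) h1
    simpa [ft] using this
  ext x
  have := congrArg (fun F : SchwartzMap (Rn n) ℂ => F x) h2
  simpa [toC_apply] using this

def cv (f g : SchwartzMap (Rn n) ℝ) : SchwartzMap (Rn n) ℝ :=
  postcompCLM Complex.reCLM (SchwartzMap.convolution (ContinuousLinearMap.mul ℂ ℂ) (toC f) (toC g))

lemma cvC_apply (f g : SchwartzMap (Rn n) ℝ) (x : Rn n) :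
    SchwartzMap.convolution (ContinuousLinearMap.mul ℂ ℂ) (toC f) (toC g) x =
      ((MeasureTheory.convolution f g (ContinuousLinearMap.mul ℝ ℝ) volume x : ℝ) : ℂ) := by
  rw [SchwartzMap.convolution_apply]
  unfold MeasureTheory.convolution
  rw [← integral_complex_ofReal]
  simp [toC_apply]

lemma cv_apply (f g : SchwartzMap (Rn n) ℝ) (x : Rn n) :
    cv f g x = MeasureTheory.convolution f g (ContinuousLinearMap.mul ℝ ℝ) volume x := by
  change (SchwartzMap.convolution (ContinuousLinearMap.mul ℂ ℂ) (toC f) (toC g) x).re = _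
  rw [cvC_apply]; simp

lemma toC_cv (f g : SchwartzMap (Rn n) ℝ) :
    toC (cv f g) = SchwartzMap.convolution (ContinuousLinearMap.mul ℂ ℂ) (toC f) (toC g) := by
  ext x
  rw [toC_apply, cv_apply, cvC_apply]

lemma ft_cv (f g : SchwartzMap (Rn n) ℝ) (ξ : Rn n) : ft (cv f g) ξ = ft f ξ * ft g ξ := by
  unfold ft
  rw [toC_cv, SchwartzMap.fourier_convolution]
  simp

lemma toC_add (f g : SchwartzMap (Rn n) ℝ) : toC (f + g) = toC f + toC g := by
  ext x; simp [toC_apply]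

lemma toC_sub (f g : SchwartzMap (Rn n) ℝ) : toC (f - g) = toC f - toC g := by
  ext x; simp [toC_apply]

lemma ft_add (f g : SchwartzMap (Rn n) ℝ) (ξ : Rn n) : ft (f + g) ξ = ft f ξ + ft g ξ := by
  simp [ft, toC_add, FourierTransform.fourier_add]

lemma ft_sub (f g : SchwartzMap (Rn n) ℝ) (ξ : Rn n) : ft (f - g) ξ = ft f ξ - ft g ξ := by
  have := ft_add (f - g) g ξ
  simp at this; simp [this]

/-- product -/
def ml (f g : SchwartzMap (Rn n) ℝ) : SchwartzMap (Rn n) ℝ :=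
  pairing (ContinuousLinearMap.mul ℝ ℝ) f g

lemma ml_apply (f g : SchwartzMap (Rn n) ℝ) (x : Rn n) : ml f g x = f x * g x := by
  simp [ml]

lemma ft_ml (f g : SchwartzMap (Rn n) ℝ) :
    ft (ml f g) = SchwartzMap.convolution (ContinuousLinearMap.mul ℂ ℂ) (ft f) (ft g) := by
  have key : toC (ml f g) =
      𝓕⁻ (SchwartzMap.convolution (ContinuousLinearMap.mul ℂ ℂ) (ft f) (ft g)) := by
    ext x
    have e : ∀ h : SchwartzMap (Rn n) ℂ, 𝓕⁻ h x = 𝓕 h (-x) := by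
      intro h
      rw [fourierInv_coe, fourier_coe]
      exact Real.fourierInv_eq_fourier_neg _ _
    rw [e, SchwartzMap.fourier_convolution]
    rw [pairing_apply_apply, ← e, ← e]
    simp [ft, toC_apply, ml_apply]
  unfold ft at *
  rw [key]; simp

/-- If `ft f` is supported in the open ball of radius `R` and same for `g`, then `ft (f g)`
is supported in ball of radius `2R`. -/
lemma ft_ml_eq_zero {f g : SchwartzMap (Rn n) ℝ} {R : ℝ}
    (hf : ∀ ξ, R ≤ ‖ξ‖ → ft f ξ = 0) (hg : ∀ ξ, R ≤ ‖ξ‖ → ft g ξ = 0) (ξ : Rn n)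
    (hξ : 2 * R ≤ ‖ξ‖) : ft (ml f g) ξ = 0 := by
  rw [ft_ml, SchwartzMap.convolution_apply]
  unfold MeasureTheory.convolution
  apply integral_eq_zero_of_ae
  filter_upwards with t
  by_cases h : R ≤ ‖t‖
  · simp [hf t h]
  · have : R ≤ ‖ξ - t‖ := by
      have := norm_sub_norm_le ξ t
      linarith
    simp [hg _ this]

lemma ft_pd (f : SchwartzMap (Rn n) ℝ) (m : Rn n) (ξ : Rn n) :
    ft (∂_{m} f) ξ = (2 * π * Complex.I) * ((inner ℝ ξ m : ℝ) : ℂ) * ft f ξ := by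
  have : toC (∂_{m} f) = ∂_{m} (toC f) := by
    ext x
    rw [toC_apply, lineDerivOp_apply_eq_fderiv, lineDerivOp_apply_eq_fderiv]
    have h1 : HasFDerivAt (fun x => ((f x : ℝ) : ℂ)) (Complex.ofRealCLM.comp (fderiv ℝ f x)) x :=
      Complex.ofRealCLM.hasFDerivAt.comp x (f.hasFDerivAt x)
    have h2 : fderiv ℝ (⇑(toC f)) x = Complex.ofRealCLM.comp (fderiv ℝ f x) := h1.fderiv
    rw [h2]; simp
  unfold ft
  rw [this, fourier_lineDerivOp_eq]
  have hg : (fun x : Rn n => inner ℝ x m).HasTemperateGrowth := by fun_prop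
  simp [smulLeftCLM_apply_apply hg, mul_assoc]

lemma cv_pd (f g : SchwartzMap (Rn n) ℝ) (m : Rn n) : cv f (∂_{m} g) = cv (∂_{m} f) g := by
  apply ft_inj
  intro ξ
  simp only [ft_cv, ft_pd]; ring

lemma cv_add (f g h : SchwartzMap (Rn n) ℝ) : cv f (g + h) = cv f g + cv f h := by
  apply ft_inj; intro ξ; simp only [ft_cv, ft_add]; ring

lemma cv_sub_left (f g h : SchwartzMap (Rn n) ℝ) : cv (f - g) h = cv f h - cv g h := by
  apply ft_inj; intro ξ; simp only [ft_cv, ft_sub]; ring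

/-- dilation -/
def dil (φ : SchwartzMap (Rn n) ℝ) (j : ℤ) : SchwartzMap (Rn n) ℝ :=
  (2:ℝ) ^ (j * (n:ℤ)) • compCLMOfContinuousLinearEquiv ℝ
    (ContinuousLinearEquiv.smulLeft (Units.mk0 ((2:ℝ) ^ j) (by positivity))) φ

lemma dil_apply (φ : SchwartzMap (Rn n) ℝ) (j : ℤ) (x : Rn n) : dil φ j x = lpKernel φ j x := by
  simp [dil, lpKernel, Units.smul_def]

lemma dil_coe (φ : SchwartzMap (Rn n) ℝ) (j : ℤ) : (dil φ j : Rn n → ℝ) = lpKernel φ j := by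
  ext x; exact dil_apply φ j x

lemma ft_dil (φ : SchwartzMap (Rn n) ℝ) (j : ℤ) (ξ : Rn n) :
    ft (dil φ j) ξ = ft φ ((2:ℝ) ^ (-j) • ξ) := by
  rw [ft_eq, ft_eq, ftC, ftC, Real.fourier_eq, Real.fourier_eq]
  have h := MeasureTheory.Measure.integral_comp_smul (μ := (volume : Measure (Rn n)))
    (fun v : Rn n => 𝐞 (-(inner ℝ v ((2:ℝ) ^ (-j) • ξ))) • ((φ v : ℝ) : ℂ)) ((2:ℝ)^j)
  have h3 : (2:ℝ)^j ≠ 0 := by positivity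
  have h2 : ∀ x : Rn n, inner ℝ ((2:ℝ)^j • x) ((2:ℝ) ^ (-j) • ξ) = inner ℝ x ξ := by
    intro x
    rw [real_inner_smul_left, real_inner_smul_right, ← mul_assoc, zpow_neg, mul_inv_cancel₀ h3,
      one_mul]
  simp only [h2] at h
  rw [finrank_euclideanSpace_fin, abs_of_pos (by positivity)] at h
  have h4 : ∀ x : Rn n, 𝐞 (-(inner ℝ x ξ)) • ((dil φ j x : ℝ) : ℂ) =
      ((2:ℝ) ^ j) ^ n • (𝐞 (-(inner ℝ x ξ)) • ((φ ((2:ℝ)^j • x) : ℝ) : ℂ)) := by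
    intro x
    rw [dil_apply, lpKernel, zpow_mul, zpow_natCast]
    simp only [Circle.smul_def, Complex.real_smul, smul_eq_mul]
    push_cast; ring
  simp only [h4]
  rw [integral_smul, h, smul_smul, mul_inv_cancel₀ (by positivity), one_smul]

lemma pd_dil (φ : SchwartzMap (Rn n) ℝ) (j : ℤ) (m : Rn n) :
    ∂_{m} (dil φ j) = (2:ℝ) ^ j • dil (∂_{m} φ) j := by
  ext x
  have h3 : (2:ℝ)^j ≠ 0 := by positivity
  simp only [dil, lineDerivOp_smul, lineDerivOp_compCLMOfContinuousLinearEquiv]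
  rw [smul_comm]
  simp [Units.smul_def, lineDerivOp_left_smul]

section LP
variable {ψ₀ Ψ : SchwartzMap (Rn n) ℝ} 

lemma norm_two_zpow_smul (j : ℤ) (ξ : Rn n) : ‖(2:ℝ)^j • ξ‖ = (2:ℝ)^j * ‖ξ‖ := by
  rw [norm_smul, Real.norm_of_nonneg (by positivity)]

lemma ftψ_low (hψ : IsLPF n ψ₀) {ξ : Rn n} (h : ‖ξ‖ ≤ 1/2) : ft ψ₀ ξ = 0 := by
  by_contra h1
  have := (hψ.ft_supp ξ h1).1
  linarith

lemma ftψ_high (hψ : IsLPF n ψ₀) {ξ : Rn n} (h : 2 ≤ ‖ξ‖) : ft ψ₀ ξ = 0 := by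
  by_contra h1
  have := (hψ.ft_supp ξ h1).2
  linarith

lemma ftΨ_one (hψ : IsLPF n ψ₀) (hΨ : IsLowPiece ψ₀ Ψ) {ξ : Rn n} (h : ‖ξ‖ ≤ 1/2) :
    ft Ψ ξ = 1 := by
  rw [ft_eq, hΨ ξ]
  have : ∀ k : ℕ, ftC ψ₀ ((2:ℝ) ^ (-(k:ℤ)) • ξ) = 0 := by
    intro k
    apply ftψ_low hψ
    rw [norm_two_zpow_smul]
    have : (2:ℝ) ^ (-(k:ℤ)) ≤ 1 := by
      apply zpow_le_one_of_nonpos₀ (by norm_num) (by simp)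
    nlinarith [norm_nonneg ξ]
  simp only [this, tsum_zero, sub_zero]

lemma ftΨ_high (hψ : IsLPF n ψ₀) (hΨ : IsLowPiece ψ₀ Ψ) {ξ : Rn n} (h : 1 ≤ ‖ξ‖) :
    ft Ψ ξ = 0 := by
  rw [ft_eq, hΨ ξ]
  have hξ : ξ ≠ 0 := by
    rintro rfl; simp at h; linarith
  have h1 := hψ.ft_sum ξ hξ
  have h2 : HasSum (fun k : ℕ => ftC ψ₀ ((2:ℝ) ^ (-(k:ℤ)) • ξ)) 1 := by
    refine (Function.Injective.hasSum_iff (g := fun k : ℕ => (k : ℤ)) Nat.cast_injective ?_).mpr h1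
    intro j hj
    apply ftψ_high hψ
    have hj' : 1 ≤ -j := by
      by_contra h0
      apply hj
      exact ⟨j.toNat, by simp; omega⟩
    rw [norm_two_zpow_smul]
    have : (2:ℝ)^(1:ℤ) ≤ (2:ℝ) ^ (-j) := zpow_le_zpow_right₀ (by norm_num) hj'
    rw [zpow_one] at this
    nlinarith
  rw [h2.tsum_eq]; simp

lemma ftΨ_diff (hψ : IsLPF n ψ₀) (hΨ : IsLowPiece ψ₀ Ψ) (ξ : Rn n) :
    ft Ψ ((2:ℝ)^(-1:ℤ) • ξ) - ft Ψ ξ = ft ψ₀ ξ := by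
  rw [ft_eq, ft_eq, hΨ, hΨ]
  have hs : Summable (fun k : ℕ => ftC ψ₀ ((2:ℝ) ^ (-(k:ℤ)) • ξ)) := by
    by_cases hξ : ξ = 0
    · subst hξ
      have : ∀ k : ℕ, ftC ψ₀ ((2:ℝ) ^ (-(k:ℤ)) • (0 : Rn n)) = 0 := by
        intro k; rw [smul_zero]; exact ftψ_low hψ (by simp)
      simp only [this]; exact summable_zero
    · exact (hψ.ft_sum ξ hξ).summable.comp_injective (i := fun k : ℕ => (k : ℤ)) Nat.cast_injective
  rw [hs.tsum_eq_zero_add]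
  have : ∀ k : ℕ, (2:ℝ) ^ (-(k:ℤ)) • (2:ℝ)^(-1:ℤ) • ξ = (2:ℝ) ^ (-((k+1 : ℕ):ℤ)) • ξ := by
    intro k
    rw [smul_smul, ← zpow_add₀ (by norm_num)]; congr 2; push_cast; ring
  simp only [this]
  simp [ft_eq]

lemma dil_diff (hψ : IsLPF n ψ₀) (hΨ : IsLowPiece ψ₀ Ψ) (m : ℤ) :
    dil Ψ (m+1) - dil Ψ m = dil ψ₀ m := by
  apply ft_inj
  intro ξ
  rw [ft_sub, ft_dil, ft_dil, ft_dil, ← ftΨ_diff hψ hΨ, smul_smul, ← zpow_add₀ (by norm_num)]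
  congr 4; ring

lemma tele (hψ : IsLPF n ψ₀) (hΨ : IsLowPiece ψ₀ Ψ) (m : ℤ) (f : SchwartzMap (Rn n) ℝ) :
    cv (dil Ψ (m+1)) f = cv (dil Ψ m) f + cv (dil ψ₀ m) f := by
  rw [← dil_diff hψ hΨ m, cv_sub_left]; abel

lemma repro (hψ : IsLPF n ψ₀) (hΨ : IsLowPiece ψ₀ Ψ) (m : ℤ) (f : SchwartzMap (Rn n) ℝ) :
    cv (dil Ψ (m+2)) (cv (dil ψ₀ m) f) = cv (dil ψ₀ m) f := by
  apply ft_inj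
  intro ξ
  rw [ft_cv, ft_cv, ft_dil, ft_dil]
  by_cases h : 2 ≤ ‖(2:ℝ)^(-m) • ξ‖
  · rw [ftψ_high hψ h]; simp
  · rw [ftΨ_one hψ hΨ]; · simp
    push Not at h
    rw [norm_two_zpow_smul] at *
    have : (2:ℝ) ^ (-(m+2)) = (2:ℝ)^(-m) * (1/4) := by
      rw [neg_add, zpow_add₀ (by norm_num)]; norm_num
    rw [this]; linarith

lemma reproΨ (hψ : IsLPF n ψ₀) (hΨ : IsLowPiece ψ₀ Ψ) (m : ℤ) (f : SchwartzMap (Rn n) ℝ) :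
    cv (dil Ψ (m+1)) (cv (dil Ψ m) f) = cv (dil Ψ m) f := by
  apply ft_inj
  intro ξ
  rw [ft_cv, ft_cv, ft_dil, ft_dil]
  by_cases h : 1 ≤ ‖(2:ℝ)^(-m) • ξ‖
  · rw [ftΨ_high hψ hΨ h]; simp
  · rw [ftΨ_one hψ hΨ]; · simp
    push Not at h
    rw [norm_two_zpow_smul] at *
    have : (2:ℝ) ^ (-(m+1)) = (2:ℝ)^(-m) * (1/2) := by
      rw [neg_add, zpow_add₀ (by norm_num)]; norm_num
    rw [this]; linarith

lemma vanish (hψ : IsLPF n ψ₀) (hΨ : IsLowPiece ψ₀ Ψ) (m : ℤ) (f g : SchwartzMap (Rn n) ℝ)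
    (e : Rn n) :
    cv (dil (∂_{e} ψ₀) (m+2)) (ml (cv (dil Ψ m) f) (cv (dil Ψ m) g)) = 0 := by
  apply ft_inj
  intro ξ
  rw [ft_cv, ft_dil, ft_pd]
  have h0 : ft (0 : SchwartzMap (Rn n) ℝ) ξ = 0 := by
    have := ft_sub (0 : SchwartzMap (Rn n) ℝ) 0 ξ
    simpa using this
  rw [h0]
  have hm : (0:ℝ) < 2^m := by positivity
  have h1 : ∀ h : SchwartzMap (Rn n) ℝ, ∀ ξ, (2:ℝ)^m ≤ ‖ξ‖ → ft (cv (dil Ψ m) h) ξ = 0 := by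
    intro h ξ hξ
    rw [ft_cv, ft_dil, ftΨ_high hψ hΨ, zero_mul]
    rw [norm_two_zpow_smul, zpow_neg, inv_mul_eq_div, le_div_iff₀ hm]; linarith
  by_cases hξ : 2 * (2:ℝ)^m ≤ ‖ξ‖
  · rw [ft_ml_eq_zero (h1 f) (h1 g) ξ hξ]; simp
  · rw [ftψ_low hψ]; · simp
    push Not at hξ
    rw [norm_two_zpow_smul, zpow_neg, inv_mul_eq_div, div_le_iff₀ (by positivity), 
      zpow_add₀ (by norm_num)]
    norm_num; linarith

lemma dil_zero (φ : SchwartzMap (Rn n) ℝ) : dil φ 0 = φ := by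
  ext x; simp [dil_apply, lpKernel]

lemma integral_Ψ (hψ : IsLPF n ψ₀) (hΨ : IsLowPiece ψ₀ Ψ) : ∫ x, Ψ x = 1 := by
  have h := ftΨ_one hψ hΨ (ξ := 0) (by simp)
  rw [ft_eq, ftC, Real.fourier_eq] at h
  simp at h
  rw [integral_complex_ofReal] at h
  exact_mod_cast h

lemma cv_dil_apply (φ f : SchwartzMap (Rn n) ℝ) (m : ℤ) (x : Rn n) :
    cv (dil φ m) f x = ∫ y, φ y * f (x - (2:ℝ)^(-m) • y) := by
  rw [cv_apply]
  unfold MeasureTheory.convolution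
  have h := MeasureTheory.Measure.integral_comp_smul (μ := (volume : Measure (Rn n)))
    (fun y : Rn n => φ y * f (x - (2:ℝ)^(-m) • y)) ((2:ℝ)^m)
  rw [finrank_euclideanSpace_fin, abs_of_pos (by positivity)] at h
  have h3 : (2:ℝ)^m ≠ 0 := by positivity
  have h4 : ∀ y : Rn n, (2:ℝ)^(-m) • (2:ℝ)^m • y = y := by
    intro y; rw [smul_smul, zpow_neg, inv_mul_cancel₀ h3, one_smul]
  simp only [h4] at h
  simp only [dil_apply, lpKernel, ContinuousLinearMap.mul_apply', mul_assoc]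
  rw [integral_const_mul, h, smul_eq_mul, ← mul_assoc, zpow_mul, zpow_natCast, 
    mul_inv_cancel₀ (by positivity), one_mul]

lemma schwartz_bdd (f : SchwartzMap (Rn n) ℝ) : ∃ C, 0 ≤ C ∧ ∀ x, ‖f x‖ ≤ C :=
  ⟨SchwartzMap.seminorm ℝ 0 0 f, by positivity, fun x => norm_le_seminorm ℝ f x⟩

lemma T_tendsto (hψ : IsLPF n ψ₀) (hΨ : IsLowPiece ψ₀ Ψ) (f : SchwartzMap (Rn n) ℝ) (x : Rn n) :
    Tendsto (fun N : ℕ => cv (dil Ψ (N:ℤ)) f x) atTop (nhds (f x)) := by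
  obtain ⟨C, hC, hf⟩ := schwartz_bdd f
  have : f x = ∫ y, Ψ y * f x := by rw [integral_mul_const, integral_Ψ hψ hΨ, one_mul]
  rw [this]
  simp only [cv_dil_apply]
  apply tendsto_integral_of_dominated_convergence (fun y => ‖Ψ y‖ * C)
  · intro N; 
    exact (Continuous.mul Ψ.continuous (f.continuous.comp (by fun_prop))).aestronglyMeasurable
  · exact Ψ.integrable.norm.mul_const C
  · intro N; filter_upwards with y
    rw [norm_mul]; gcongr; exact hf _
  · filter_upwards with y
    apply Tendsto.const_mul
    have h1 : Tendsto (fun N : ℕ => x - (2:ℝ)^(-(N:ℤ)) • y) atTop (nhds (x - (0:ℝ) • y)) := by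
      apply Tendsto.sub tendsto_const_nhds
      apply Tendsto.smul_const
      have : Tendsto (fun N : ℕ => ((2:ℝ)⁻¹)^N) atTop (nhds 0) :=
        tendsto_pow_atTop_nhds_zero_of_lt_one (by norm_num) (by norm_num)
      simpa [zpow_neg] using this
    have h2 := (f.continuous.tendsto (x - (0:ℝ) • y)).comp h1
    simpa [Function.comp_def] using h2

lemma T_bdd (f : SchwartzMap (Rn n) ℝ) :
    ∃ C, 0 ≤ C ∧ ∀ (m : ℤ) x, ‖cv (dil Ψ m) f x‖ ≤ C := by
  obtain ⟨C, hC, hf⟩ := schwartz_bdd f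
  refine ⟨∫ y, ‖Ψ y‖ * C, by positivity, fun m x => ?_⟩
  rw [cv_dil_apply]
  apply norm_integral_le_of_norm_le (Ψ.integrable.norm.mul_const C)
  filter_upwards with y
  rw [norm_mul]; gcongr; exact hf _

lemma cvT_tendsto (hψ : IsLPF n ψ₀) (hΨ : IsLowPiece ψ₀ Ψ) (K f g : SchwartzMap (Rn n) ℝ)
    (x : Rn n) :
    Tendsto (fun N : ℕ => cv K (ml (cv (dil Ψ (N:ℤ)) f) (cv (dil Ψ (N:ℤ)) g)) x) atTop
      (nhds (cv K (ml f g) x)) := by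
  obtain ⟨C, hC, hf⟩ := T_bdd (Ψ := Ψ) f
  obtain ⟨D, hD, hg⟩ := T_bdd (Ψ := Ψ) g
  simp only [cv_apply]
  unfold MeasureTheory.convolution
  apply tendsto_integral_of_dominated_convergence (fun y => ‖K y‖ * (C * D))
  · intro N 
    simp only [ContinuousLinearMap.mul_apply']
    exact (Continuous.mul K.continuous ((SchwartzMap.continuous _).comp (by fun_prop))).aestronglyMeasurable
  · exact K.integrable.norm.mul_const _
  · intro N; filter_upwards with y
    rw [ContinuousLinearMap.mul_apply', norm_mul, ml_apply, norm_mul]; gcongr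
    · exact hf _ _
    · exact hg _ _
  · filter_upwards with y
    simp only [ContinuousLinearMap.mul_apply', ml_apply]
    exact ((T_tendsto hψ hΨ f _).mul (T_tendsto hψ hΨ g _)).const_mul _

end LP

lemma jensenW {α : Type*} [MeasurableSpace α] {μ : Measure α} {w a : α → ℝ≥0∞}
    (hw : Measurable w) (ha : Measurable a) {q : ℝ} (hq : 1 ≤ q) :
    ∫⁻ x, w x * a x ∂μ ≤ (∫⁻ x, w x * a x ^ q ∂μ) ^ (1/q) * (∫⁻ x, w x ∂μ) ^ (1 - 1/q) := by
  have h := eLpNorm'_le_eLpNorm'_mul_rpow_measure_univ (μ := μ.withDensity w) (f := a)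
    (p := 1) (q := q) one_pos hq ha.aestronglyMeasurable
  simp only [eLpNorm', enorm_eq_self, ENNReal.rpow_one, div_one] at h
  rw [withDensity_apply _ MeasurableSet.univ, Measure.restrict_univ] at h
  rw [lintegral_withDensity_eq_lintegral_mul _ hw ha,
    lintegral_withDensity_eq_lintegral_mul _ hw (ha.pow_const q)] at h
  simpa using h

def WW (K : SchwartzMap (Rn n) ℝ) : ℝ≥0∞ := ∫⁻ x, ‖K x‖ₑ

lemma WW_lt_top (K : SchwartzMap (Rn n) ℝ) : WW K < ∞ := K.integrable.2

lemma WW_dil (φ : SchwartzMap (Rn n) ℝ) (j : ℤ) : WW (dil φ j) = WW φ := by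
  unfold WW
  rw [← ofReal_integral_norm_eq_lintegral_enorm (SchwartzMap.integrable _),
    ← ofReal_integral_norm_eq_lintegral_enorm (SchwartzMap.integrable _)]
  congr 1
  have h := MeasureTheory.Measure.integral_comp_smul (μ := (volume : Measure (Rn n)))
    (fun y : Rn n => ‖φ y‖) ((2:ℝ)^j)
  rw [finrank_euclideanSpace_fin, abs_of_pos (by positivity)] at h
  simp only [dil_apply, lpKernel, norm_mul]
  rw [integral_const_mul, h, smul_eq_mul, ← mul_assoc, zpow_mul, zpow_natCast, norm_pow, norm_zpow,
    Real.norm_of_nonneg (by norm_num : (0:ℝ) ≤ 2), mul_inv_cancel₀ (by positivity), one_mul]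

lemma enorm_cv_le (K h : SchwartzMap (Rn n) ℝ) {q : ℝ} (hq : 1 ≤ q) (x : Rn n) :
    ‖cv K h x‖ₑ ≤ (∫⁻ t, ‖K t‖ₑ * ‖h (x - t)‖ₑ ^ q) ^ (1/q) * (WW K) ^ (1 - 1/q) := by
  rw [cv_apply]
  unfold MeasureTheory.convolution
  refine (enorm_integral_le_lintegral_enorm _).trans ?_
  simp only [ContinuousLinearMap.mul_apply', enorm_mul]
  apply jensenW _ _ hq
  · exact K.continuous.measurable.enorm
  · exact (h.continuous.comp (by fun_prop : Continuous fun t => x - t)).measurable.enorm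

lemma young (K h : SchwartzMap (Rn n) ℝ) {P : ℝ≥0∞} (hP : 1 ≤ P) (hP' : P < ∞) :
    eLpNorm (cv K h) P volume ≤ WW K * eLpNorm h P volume := by
  have hP0 : P ≠ 0 := by rintro rfl; simp at hP
  set q := P.toReal with hqd
  have hq : 1 ≤ q := by
    rw [hqd, ← ENNReal.toReal_one]; exact ENNReal.toReal_mono hP'.ne hP
  have hq0 : q ≠ 0 := by positivity
  rw [eLpNorm_eq_lintegral_rpow_enorm_toReal hP0 hP'.ne, eLpNorm_eq_lintegral_rpow_enorm_toReal hP0 hP'.ne,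
    ← hqd]
  have h1 : ∫⁻ x, ‖cv K h x‖ₑ ^ q ≤ ∫⁻ x, (∫⁻ t, ‖K t‖ₑ * ‖h (x - t)‖ₑ ^ q) * (WW K) ^ (q - 1) := by
    apply lintegral_mono
    intro x
    have := ENNReal.rpow_le_rpow (enorm_cv_le K h hq x) (by positivity : 0 ≤ q)
    refine this.trans (le_of_eq ?_)
    rw [ENNReal.mul_rpow_of_nonneg _ _ (by positivity), ← ENNReal.rpow_mul, ← ENNReal.rpow_mul]
    rw [one_div_mul_cancel hq0, ENNReal.rpow_one]
    congr 2; field_simp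
  have hm : Measurable (fun p : Rn n × Rn n => ‖K p.2‖ₑ * ‖h (p.1 - p.2)‖ₑ ^ q) := by
    apply Measurable.mul
    · exact (K.continuous.comp continuous_snd).measurable.enorm
    · exact ((h.continuous.comp (continuous_fst.sub continuous_snd)).measurable.enorm).pow_const q
  have h2 : ∫⁻ x, (∫⁻ t, ‖K t‖ₑ * ‖h (x - t)‖ₑ ^ q) = WW K * ∫⁻ x, ‖h x‖ₑ ^ q := by
    rw [lintegral_lintegral_swap hm.aemeasurable]
    have : ∀ t : Rn n, ∫⁻ x, ‖K t‖ₑ * ‖h (x - t)‖ₑ ^ q = ‖K t‖ₑ * ∫⁻ x, ‖h x‖ₑ ^ q := by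
      intro t
      rw [lintegral_const_mul' _ _ (by simp)]
      congr 1
      exact lintegral_sub_right_eq_self (fun x => ‖h x‖ₑ ^ q) t
    simp only [this]
    rw [lintegral_mul_const _ K.continuous.measurable.enorm]; rfl
  have hWt : WW K ^ (q-1) ≠ ∞ := ENNReal.rpow_ne_top_of_nonneg (by linarith) (WW_lt_top K).ne
  rw [lintegral_mul_const' _ _ hWt, h2] at h1
  refine (ENNReal.rpow_le_rpow h1 (by positivity : 0 ≤ 1/q)).trans (le_of_eq ?_)
  rw [mul_right_comm]
  have : WW K * WW K ^ (q-1) = WW K ^ q := by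
    nth_rewrite 1 [← ENNReal.rpow_one (WW K)]
    rw [← ENNReal.rpow_add_of_nonneg _ _ (by norm_num) (by linarith)]; congr 1; ring
  rw [this, ENNReal.mul_rpow_of_nonneg _ _ (by positivity), ← ENNReal.rpow_mul, mul_one_div_cancel hq0,
    ENNReal.rpow_one]

/-- sup bound -/
def MM (K : SchwartzMap (Rn n) ℝ) : ℝ≥0∞ := ENNReal.ofReal (SchwartzMap.seminorm ℝ 0 0 K)

lemma enorm_le_MM (K : SchwartzMap (Rn n) ℝ) (x : Rn n) : ‖K x‖ₑ ≤ MM K := by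
  rw [← ofReal_norm]
  exact ENNReal.ofReal_le_ofReal (norm_le_seminorm ℝ K x)

lemma enorm_dil_le (φ : SchwartzMap (Rn n) ℝ) (m : ℕ) (x : Rn n) :
    ‖dil φ (m:ℤ) x‖ₑ ≤ ENNReal.ofReal ((2:ℝ) ^ ((m:ℝ) * n)) * MM φ := by
  rw [dil_apply, lpKernel, enorm_mul]
  gcongr
  · rw [← ofReal_norm, Real.norm_of_nonneg (by positivity)]
    apply le_of_eq; congr 1
    rw [← Nat.cast_mul, ← Nat.cast_mul, zpow_natCast, Real.rpow_natCast]
  · exact enorm_le_MM _ _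

lemma sup_cv (φ h : SchwartzMap (Rn n) ℝ) (m : ℕ) {P : ℝ≥0∞} (hP : 1 ≤ P) (hP' : P < ∞) (x : Rn n) :
    ‖cv (dil φ (m:ℤ)) h x‖ₑ ≤ (MM φ ^ (1/P.toReal) * WW φ ^ (1 - 1/P.toReal)) *
      ENNReal.ofReal ((2:ℝ) ^ ((m:ℝ) * (n / P.toReal))) * eLpNorm h P volume := by
  have hP0 : P ≠ 0 := by rintro rfl; simp at hP
  set q := P.toReal with hqd
  have hq : 1 ≤ q := by
    rw [hqd, ← ENNReal.toReal_one]; exact ENNReal.toReal_mono hP'.ne hP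
  have hq0 : q ≠ 0 := by positivity
  refine (enorm_cv_le _ h hq x).trans ?_
  rw [WW_dil, eLpNorm_eq_lintegral_rpow_enorm_toReal hP0 hP'.ne, ← hqd]
  have h1 : ∫⁻ t, ‖dil φ (m:ℤ) t‖ₑ * ‖h (x - t)‖ₑ ^ q ≤
      ENNReal.ofReal ((2:ℝ) ^ ((m:ℝ) * n)) * MM φ * ∫⁻ t, ‖h t‖ₑ ^ q := by
    calc _ ≤ ∫⁻ t, (ENNReal.ofReal ((2:ℝ) ^ ((m:ℝ) * n)) * MM φ) * ‖h (x - t)‖ₑ ^ q := by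
          apply lintegral_mono; intro t; dsimp only; gcongr; exact enorm_dil_le φ m t
      _ = _ := by
          rw [lintegral_const_mul' _ _ (ENNReal.mul_ne_top (by simp) (by simp [MM]))]
          congr 1
          exact lintegral_sub_left_eq_self (fun t => ‖h t‖ₑ ^ q) x
  calc _ ≤ (ENNReal.ofReal ((2:ℝ) ^ ((m:ℝ) * n)) * MM φ * ∫⁻ t, ‖h t‖ₑ ^ q) ^ (1/q) * WW φ ^ (1 - 1/q) := by
        gcongr
    _ = _ := by
        rw [ENNReal.mul_rpow_of_nonneg _ _ (by positivity), ENNReal.mul_rpow_of_nonneg _ _ (by positivity),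
          ENNReal.ofReal_rpow_of_nonneg (by positivity) (by positivity), ← Real.rpow_mul (by norm_num)]
        have : (m:ℝ) * n * (1/q) = m * (n/q) := by ring
        rw [this]; ring

/-- Bernstein constant -/
def bernC (φ : SchwartzMap (Rn n) ℝ) (p r : ℝ) : ℝ≥0∞ :=
  (MM φ ^ (1/p) * WW φ ^ (1 - 1/p)) ^ (1 - p/r)

lemma bernC_lt_top (φ : SchwartzMap (Rn n) ℝ) {p r : ℝ} (hp : 1 ≤ p) (hpr : p ≤ r) :
    bernC φ p r < ∞ := by
  unfold bernC
  have h1 : 0 ≤ 1 - 1/p := by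
    rw [sub_nonneg, div_le_one (by linarith)]; exact hp
  have h2 : 0 ≤ 1 - p/r := by
    rw [sub_nonneg, div_le_one (by linarith)]; exact hpr
  apply ENNReal.rpow_lt_top_of_nonneg h2
  apply ENNReal.mul_ne_top
  · exact ENNReal.rpow_ne_top_of_nonneg (by positivity) (by simp [MM])
  · exact ENNReal.rpow_ne_top_of_nonneg h1 (WW_lt_top φ).ne

lemma interp_aux {α : Type*} [MeasurableSpace α] {μ : Measure α} (h : α → ℝ≥0∞) {p r : ℝ}
    (hp : 0 < p) (hpr : p ≤ r) (B : ℝ≥0∞) (hB : B ≠ ∞) (hsup : ∀ x, h x ≤ B) :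
    (∫⁻ x, h x ^ r ∂μ) ^ (1/r) ≤ B ^ (1 - p/r) * ((∫⁻ x, h x ^ p ∂μ) ^ (1/p)) ^ (p/r) := by
  have hr0 : 0 < r := by linarith
  have hBt : B ^ (r - p) ≠ ∞ := ENNReal.rpow_ne_top_of_nonneg (by linarith) hB
  have h1 : ∫⁻ x, h x ^ r ∂μ ≤ B ^ (r - p) * ∫⁻ x, h x ^ p ∂μ := by
    rw [← lintegral_const_mul' _ _ hBt]
    apply lintegral_mono
    intro x
    dsimp only
    have : r = (r - p) + p := by ring
    nth_rewrite 1 [this]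
    rw [ENNReal.rpow_add_of_nonneg _ _ (by linarith) hp.le]
    gcongr
    exact hsup x
  refine (ENNReal.rpow_le_rpow h1 (by positivity : 0 ≤ 1/r)).trans (le_of_eq ?_)
  rw [ENNReal.mul_rpow_of_nonneg _ _ (by positivity), ← ENNReal.rpow_mul, ← ENNReal.rpow_mul]
  have e1 : (r - p) * (1/r) = 1 - p/r := by field_simp
  have e2 : 1/p * (p/r) = 1 / r := by field_simp
  rw [e1, e2]

lemma interp_alg (c A : ℝ≥0∞) (m k p r : ℝ) (hp : 0 < p) (hpr : p ≤ r) :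
    (c * ENNReal.ofReal ((2:ℝ) ^ (m * (k / p))) * A) ^ (1 - p/r) * A ^ (p/r) =
    c ^ (1 - p/r) * ENNReal.ofReal ((2:ℝ) ^ (m * (k * (1 / p - 1 / r)))) * A := by
  have hr0 : 0 < r := by linarith
  have h2 : 0 ≤ 1 - p/r := by
    rw [sub_nonneg, div_le_one (by linarith)]; exact hpr
  rw [ENNReal.mul_rpow_of_nonneg _ _ h2, ENNReal.mul_rpow_of_nonneg _ _ h2,
    ENNReal.ofReal_rpow_of_nonneg (by positivity) h2, ← Real.rpow_mul (by norm_num), mul_assoc,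
    ← ENNReal.rpow_add_of_nonneg _ _ h2 (by positivity), sub_add_cancel, ENNReal.rpow_one]
  have : m * (k / p) * (1 - p/r) = m * (k * (1/p - 1/r)) := by field_simp
  rw [this]

lemma bernstein_ineq (φ h : SchwartzMap (Rn n) ℝ) (m : ℕ) (hrep : cv (dil φ (m:ℤ)) h = h) {P R : ℝ≥0∞}
    (hP : 1 ≤ P) (hPR : P ≤ R) (hR : R < ∞) :
    eLpNorm h R volume ≤ bernC φ P.toReal R.toReal *
      ENNReal.ofReal ((2:ℝ) ^ ((m:ℝ) * (n * (1 / P.toReal - 1 / R.toReal)))) * eLpNorm h P volume := by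
  have hP' : P < ∞ := hPR.trans_lt hR
  have hP0 : P ≠ 0 := by rintro rfl; simp at hP
  have hR0 : R ≠ 0 := by rintro rfl; simp at hPR; exact hP0 hPR
  have hsup := sup_cv φ h m hP hP'
  rw [hrep] at hsup
  have hp : 1 ≤ P.toReal := by
    rw [← ENNReal.toReal_one]; exact ENNReal.toReal_mono hP'.ne hP
  have hpr : P.toReal ≤ R.toReal := ENNReal.toReal_mono hR.ne hPR
  have hAt : eLpNorm h P volume ≠ ∞ := (h.eLpNorm_lt_top P volume).ne
  have hc : MM φ ^ (1/P.toReal) * WW φ ^ (1 - 1/P.toReal) ≠ ∞ := by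
    apply ENNReal.mul_ne_top
    · exact ENNReal.rpow_ne_top_of_nonneg (by positivity) (by simp [MM])
    · refine ENNReal.rpow_ne_top_of_nonneg ?_ (WW_lt_top φ).ne
      rw [sub_nonneg, div_le_one (by linarith)]; exact hp
  have h1 := interp_aux (μ := volume) (fun x => ‖h x‖ₑ) (by linarith : 0 < P.toReal) hpr _
    (ENNReal.mul_ne_top (ENNReal.mul_ne_top hc ENNReal.ofReal_ne_top) hAt) hsup
  rw [← eLpNorm_eq_lintegral_rpow_enorm_toReal hR0 hR.ne,
    ← eLpNorm_eq_lintegral_rpow_enorm_toReal hP0 hP'.ne,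
    interp_alg _ _ _ _ _ _ (by linarith : 0 < P.toReal) hpr] at h1
  exact h1

lemma holder (f g : SchwartzMap (Rn n) ℝ) {p r pb : ℝ≥0∞} [ENNReal.HolderTriple p r pb] :
    eLpNorm (ml f g) pb volume ≤ eLpNorm f p volume * eLpNorm g r volume := by
  have := eLpNorm_smul_le_mul_eLpNorm (μ := volume) (p := p) (q := r) (r := pb) (f := g) (φ := f)
    g.continuous.aestronglyMeasurable f.continuous.aestronglyMeasurable
  have e : (f : Rn n → ℝ) • (g : Rn n → ℝ) = ml f g := by
    ext x; simp [ml_apply]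
  rwa [e] at this

def lq (q : ℝ≥0∞) (a : ℕ → ℝ≥0∞) : ℝ≥0∞ :=
  if q = ∞ then ⨆ j : ℕ, a j else (∑' j : ℕ, a j ^ q.toReal) ^ (1 / q.toReal)

section
variable {q : ℝ≥0∞}

lemma toReal_one_le (hq : 1 ≤ q) (h : q ≠ ∞) : 1 ≤ q.toReal := by
  rw [← ENNReal.toReal_one]; exact ENNReal.toReal_mono h hq

lemma lq_mono {a b : ℕ → ℝ≥0∞} (h : ∀ j, a j ≤ b j) : lq q a ≤ lq q b := by
  unfold lq
  split_ifs
  · exact iSup_mono h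
  · gcongr
    exact h _

lemma le_lq (hq : 1 ≤ q) (a : ℕ → ℝ≥0∞) (j : ℕ) : a j ≤ lq q a := by
  unfold lq
  split_ifs with h
  · exact le_iSup a j
  · have h1 := toReal_one_le hq h
    calc a j = (a j ^ q.toReal) ^ (1/q.toReal) := by
          rw [← ENNReal.rpow_mul, mul_one_div_cancel (by positivity), ENNReal.rpow_one]
      _ ≤ _ := by
          gcongr
          exact ENNReal.le_tsum j

lemma lq_const_mul (hq : 1 ≤ q) (c : ℝ≥0∞) (a : ℕ → ℝ≥0∞) : lq q (fun j => c * a j) = c * lq q a := by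
  unfold lq
  split_ifs with h
  · rw [ENNReal.mul_iSup]
  · have h1 := toReal_one_le hq h
    simp only [ENNReal.mul_rpow_of_nonneg _ _ (by positivity : 0 ≤ q.toReal)]
    rw [ENNReal.tsum_mul_left, ENNReal.mul_rpow_of_nonneg _ _ (by positivity), ← ENNReal.rpow_mul,
      mul_one_div_cancel (by positivity), ENNReal.rpow_one]

lemma lq_add (hq : 1 ≤ q) (a b : ℕ → ℝ≥0∞) : lq q (fun j => a j + b j) ≤ lq q a + lq q b := by
  by_cases h : q = ∞
  · have : lq q (fun j => a j + b j) = ⨆ j, (a j + b j) := by simp [lq, h]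
    rw [this]
    exact iSup_le fun j => add_le_add (le_lq hq a j) (le_lq hq b j)
  · unfold lq
    simp only [h, if_false]
    have h1 := toReal_one_le hq h
    have := ENNReal.lintegral_Lp_add_le (μ := Measure.count) (f := a) (g := b)
      (measurable_of_countable a).aemeasurable (measurable_of_countable b).aemeasurable h1
    simpa [lintegral_count] using this

lemma lq_ind (hq : 1 ≤ q) (c : ℝ≥0∞) : lq q (fun j => if j < 2 then c else 0) ≤ 2 * c := by
  by_cases h : q = ∞
  · simp only [lq, h, if_true]
    refine iSup_le fun j => ?_
    split_ifs
    · rw [two_mul]; exact le_add_self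
    · simp
  · unfold lq
    simp only [h, if_false]
    have h1 := toReal_one_le hq h
    have h2 : ∑' j : ℕ, (if j < 2 then c else 0) ^ q.toReal = 2 * c ^ q.toReal := by
      rw [tsum_eq_sum (s := Finset.range 2)]
      · simp [Finset.sum_range_succ, two_mul]
      · intro j hj
        simp at hj
        rw [if_neg (by omega)]
        exact ENNReal.zero_rpow_of_pos (by linarith)
    rw [h2, ENNReal.mul_rpow_of_nonneg _ _ (by positivity), ← ENNReal.rpow_mul,
      mul_one_div_cancel (by positivity), ENNReal.rpow_one]
    gcongr
    calc (2:ℝ≥0∞) ^ (1/q.toReal) ≤ 2 ^ (1:ℝ) := by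
          apply ENNReal.rpow_le_rpow_of_exponent_le (by norm_num)
          rw [div_le_one (by linarith)]; exact h1
      _ = 2 := by simp

lemma tsum_shift (b : ℕ → ℝ≥0∞) (i : ℕ) : ∑' j : ℕ, b (j - 2 + i) ≤ 3 * ∑' j, b j := by
  rw [tsum_eq_zero_add' ENNReal.summable, tsum_eq_zero_add' ENNReal.summable]
  have h1 : ∑' j : ℕ, b (j + 1 + 1 - 2 + i) ≤ ∑' j, b j := by
    have : ∀ j, j + 1 + 1 - 2 + i = j + i := fun j => by omega
    simp only [this]
    exact ENNReal.tsum_comp_le_tsum_of_injective (add_left_injective i) b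
  have h2 : b (0 - 2 + i) ≤ ∑' j, b j := ENNReal.le_tsum _
  have h3 : b (0 + 1 - 2 + i) ≤ ∑' j, b j := ENNReal.le_tsum _
  calc _ ≤ (∑' j, b j) + ((∑' j, b j) + (∑' j, b j)) := by gcongr
    _ = _ := by ring

lemma lq_shift (hq : 1 ≤ q) (w a : ℕ → ℝ≥0∞) (hw : ∑' i, w i ≠ ∞) :
    lq q (fun j => ∑' i : ℕ, w i * a (j - 2 + i)) ≤ 3 * (∑' i, w i) * lq q a := by
  by_cases h : q = ∞
  · have : lq q (fun j => ∑' i : ℕ, w i * a (j - 2 + i)) = ⨆ j, ∑' i : ℕ, w i * a (j - 2 + i) := by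
      simp [lq, h]
    rw [this]
    refine iSup_le fun j => ?_
    calc ∑' i : ℕ, w i * a (j - 2 + i) ≤ ∑' i : ℕ, w i * lq q a := by
          gcongr with i; exact le_lq hq a _
      _ = 1 * (∑' i, w i) * lq q a := by rw [ENNReal.tsum_mul_right, one_mul]
      _ ≤ _ := by gcongr; norm_num
  · unfold lq
    simp only [h, if_false]
    have h1 := toReal_one_le hq h
    set Q := q.toReal
    have hQ0 : Q ≠ 0 := by positivity
    set W := ∑' i, w i with hW
    have hJ : ∀ j : ℕ, (∑' i : ℕ, w i * a (j - 2 + i)) ^ Q ≤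
        (∑' i : ℕ, w i * a (j - 2 + i) ^ Q) * W ^ (Q - 1) := by
      intro j
      have := jensenW (μ := Measure.count) (measurable_of_countable w)
        (measurable_of_countable (fun i => a (j - 2 + i))) h1
      simp only [lintegral_count] at this
      refine (ENNReal.rpow_le_rpow this (by positivity : 0 ≤ Q)).trans (le_of_eq ?_)
      rw [ENNReal.mul_rpow_of_nonneg _ _ (by positivity), ← ENNReal.rpow_mul, ← ENNReal.rpow_mul]
      rw [one_div_mul_cancel hQ0, ENNReal.rpow_one, ← hW]
      congr 2; field_simp
    have h2 : ∑' j : ℕ, (∑' i : ℕ, w i * a (j - 2 + i)) ^ Q ≤ 3 * W ^ Q * ∑' j, a j ^ Q := by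
      calc _ ≤ ∑' j : ℕ, (∑' i : ℕ, w i * a (j - 2 + i) ^ Q) * W ^ (Q - 1) :=
            ENNReal.tsum_le_tsum hJ
        _ = (∑' i : ℕ, w i * ∑' j : ℕ, a (j - 2 + i) ^ Q) * W ^ (Q - 1) := by
            rw [ENNReal.tsum_mul_right, ENNReal.tsum_comm]
            simp only [ENNReal.tsum_mul_left]
        _ ≤ (∑' i : ℕ, w i * (3 * ∑' j : ℕ, a j ^ Q)) * W ^ (Q - 1) := by
            gcongr with i
            exact tsum_shift (fun j => a j ^ Q) i
        _ = _ := by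
            rw [ENNReal.tsum_mul_right, ← hW]
            have : W ^ Q = W * W ^ (Q-1) := by
              nth_rewrite 2 [← ENNReal.rpow_one W]
              rw [← ENNReal.rpow_add_of_nonneg _ _ (by norm_num) (by linarith)]; congr 1; ring
            rw [this]; ring
    refine (ENNReal.rpow_le_rpow h2 (by positivity : 0 ≤ 1/Q)).trans ?_
    rw [ENNReal.mul_rpow_of_nonneg _ _ (by positivity), ENNReal.mul_rpow_of_nonneg _ _ (by positivity),
      ← ENNReal.rpow_mul, mul_one_div_cancel hQ0, ENNReal.rpow_one]
    gcongr
    calc (3:ℝ≥0∞) ^ (1/Q) ≤ 3 ^ (1:ℝ) := by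
          apply ENNReal.rpow_le_rpow_of_exponent_le (by norm_num)
          rw [div_le_one (by linarith)]; exact h1
      _ = 3 := by simp

end

def TT (φ : SchwartzMap (Rn n) ℝ) (m : ℕ) (f : SchwartzMap (Rn n) ℝ) : SchwartzMap (Rn n) ℝ :=
  cv (dil φ (m:ℤ)) f

/-- weighted block -/
def blk (ψ₀ : SchwartzMap (Rn n) ℝ) (s : ℝ) (p : ℝ≥0∞) (f : SchwartzMap (Rn n) ℝ) (j : ℕ) : ℝ≥0∞ :=
  ENNReal.ofReal ((2:ℝ) ^ ((j:ℝ) * s)) * eLpNorm (TT ψ₀ j f) p volume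

def bs (ψ₀ Ψ : SchwartzMap (Rn n) ℝ) (s : ℝ) (p q : ℝ≥0∞) (f : SchwartzMap (Rn n) ℝ) : ℝ≥0∞ :=
  eLpNorm (TT Ψ 0 f) p volume + lq q (blk ψ₀ s p f)

lemma TT_coe (φ : SchwartzMap (Rn n) ℝ) (m : ℕ) (f : SchwartzMap (Rn n) ℝ) :
    (TT φ m f : Rn n → ℝ) = lpProj φ (m:ℤ) f := by
  ext x
  rw [TT, cv_apply, lpProj, dil_coe]

lemma besov_eq_bs (ψ₀ Ψ : SchwartzMap (Rn n) ℝ) (s : ℝ) (p q : ℝ≥0∞) (f : SchwartzMap (Rn n) ℝ) :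
    besovNorm ψ₀ Ψ s p q f = bs ψ₀ Ψ s p q f := by
  unfold besovNorm bs lq blk
  simp only [TT_coe]
  congr 3
  ext x
  simp [lpProj, lpKernel, MeasureTheory.convolution]

lemma eLpNorm_add_S (f g : SchwartzMap (Rn n) ℝ) {p : ℝ≥0∞} (hp : 1 ≤ p) :
    eLpNorm (f + g : SchwartzMap (Rn n) ℝ) p volume ≤ eLpNorm f p volume + eLpNorm g p volume :=
  eLpNorm_add_le f.continuous.aestronglyMeasurable g.continuous.aestronglyMeasurable hp

section core
variable {ψ₀ Ψ : SchwartzMap (Rn n) ℝ}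

lemma TT_succ (hψ : IsLPF n ψ₀) (hΨ : IsLowPiece ψ₀ Ψ) (m : ℕ) (f : SchwartzMap (Rn n) ℝ) :
    TT Ψ (m+1) f = TT Ψ m f + TT ψ₀ m f := by
  unfold TT
  rw [← tele hψ hΨ]; push_cast; rfl

lemma bs_add (s : ℝ) {p q : ℝ≥0∞} (hp : 1 ≤ p) (hq : 1 ≤ q) (f g : SchwartzMap (Rn n) ℝ) :
    bs ψ₀ Ψ s p q (f + g) ≤ bs ψ₀ Ψ s p q f + bs ψ₀ Ψ s p q g := by
  unfold bs
  have h1 : eLpNorm (TT Ψ 0 (f + g)) p volume ≤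
      eLpNorm (TT Ψ 0 f) p volume + eLpNorm (TT Ψ 0 g) p volume := by
    unfold TT; rw [cv_add]; exact eLpNorm_add_S _ _ hp
  have h2 : lq q (blk ψ₀ s p (f+g)) ≤ lq q (blk ψ₀ s p f) + lq q (blk ψ₀ s p g) := by
    refine le_trans (lq_mono ?_) (lq_add hq _ _)
    intro j
    unfold blk
    rw [← mul_add]
    gcongr
    unfold TT; rw [cv_add]; exact eLpNorm_add_S _ _ hp
  calc _ ≤ _ := add_le_add h1 h2
    _ = _ := by ring

lemma cv_zero (φ : SchwartzMap (Rn n) ℝ) : cv φ 0 = 0 := by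
  have := cv_add φ 0 0
  simpa using this

lemma bs_zero (s : ℝ) {p q : ℝ≥0∞} (hq : 1 ≤ q) : bs ψ₀ Ψ s p q (0 : SchwartzMap (Rn n) ℝ) = 0 := by
  have h0 : eLpNorm ((0 : SchwartzMap (Rn n) ℝ) : Rn n → ℝ) p volume = 0 := by
    rw [FunLike.coe_zero]; exact eLpNorm_zero
  have h1 : blk ψ₀ s p (0 : SchwartzMap (Rn n) ℝ) = fun j => 0 * (0:ℝ≥0∞) := by
    ext j
    unfold blk TT; rw [cv_zero, h0]; simp
  unfold bs
  rw [h1, lq_const_mul hq]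
  unfold TT; rw [cv_zero, h0]; simp

lemma bs_sum (s : ℝ) {p q : ℝ≥0∞} (hp : 1 ≤ p) (hq : 1 ≤ q) {ι : Type*} (t : Finset ι)
    (f : ι → SchwartzMap (Rn n) ℝ) :
    bs ψ₀ Ψ s p q (∑ i ∈ t, f i) ≤ ∑ i ∈ t, bs ψ₀ Ψ s p q (f i) :=
  Finset.le_sum_of_subadditive _ (bs_zero s hq).le (bs_add s hp hq) t f

lemma block_le (s : ℝ) {p q : ℝ≥0∞} (hq : 1 ≤ q) (f : SchwartzMap (Rn n) ℝ) (j : ℕ) :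
    eLpNorm (TT ψ₀ j f) p volume ≤
      ENNReal.ofReal ((2:ℝ) ^ (-((j:ℝ) * s))) * blk ψ₀ s p f j := by
  unfold blk
  rw [← mul_assoc, ← ENNReal.ofReal_mul (by positivity), ← Real.rpow_add (by norm_num)]
  simp

lemma blk_le_bs (s : ℝ) {p q : ℝ≥0∞} (hq : 1 ≤ q) (f : SchwartzMap (Rn n) ℝ) (j : ℕ) :
    blk ψ₀ s p f j ≤ bs ψ₀ Ψ s p q f :=
  (le_lq hq _ j).trans le_add_self

/-- uniform `L^r` bound for low frequency cutoffs. -/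
lemma T_r_bound (hψ : IsLPF n ψ₀) (hΨ : IsLowPiece ψ₀ Ψ) (s : ℝ) {p q r : ℝ≥0∞} (hq : 1 ≤ q)
    (hp : 1 ≤ p) (hpr : p ≤ r) (hr : r < ∞)
    (hs : (n:ℝ) * (1 / p.toReal - 1 / r.toReal) < s) :
    ∃ C : ℝ≥0∞, C ≠ ∞ ∧ ∀ (f : SchwartzMap (Rn n) ℝ) (m : ℕ),
      eLpNorm (TT Ψ m f) r volume ≤ C * bs ψ₀ Ψ s p q f := by
  set δ := (n:ℝ) * (1 / p.toReal - 1 / r.toReal) with hδ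
  set b := bernC Ψ p.toReal r.toReal with hb
  have hp1 : 1 ≤ p.toReal := toReal_one_le hp (hpr.trans_lt hr).ne
  have hbt : b ≠ ∞ := (bernC_lt_top Ψ hp1 (ENNReal.toReal_mono hr.ne hpr)).ne
  set ρ := ENNReal.ofReal ((2:ℝ) ^ (δ - s)) with hρ
  have hρ1 : ρ < 1 := by
    rw [hρ, ENNReal.ofReal_lt_one]
    exact Real.rpow_lt_one_of_one_lt_of_neg (by norm_num) (by linarith)
  have hgeo : ∑' a : ℕ, ρ ^ a ≠ ∞ := by
    rw [ENNReal.tsum_geometric]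
    exact ENNReal.inv_ne_top.2 (tsub_pos_of_lt hρ1).ne'
  set c1 := b * ENNReal.ofReal ((2:ℝ) ^ δ) with hc1
  set c2 := b * ENNReal.ofReal ((2:ℝ) ^ (2 * δ)) with hc2
  refine ⟨c1 + c2 * ∑' a : ℕ, ρ ^ a, ?_, ?_⟩
  · refine ENNReal.add_ne_top.2 ⟨ENNReal.mul_ne_top hbt ENNReal.ofReal_ne_top, ?_⟩
    exact ENNReal.mul_ne_top (ENNReal.mul_ne_top hbt ENNReal.ofReal_ne_top) hgeo
  intro f
  have h0 : eLpNorm (TT Ψ 0 f) r volume ≤ c1 * bs ψ₀ Ψ s p q f := by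
    have := bernstein_ineq Ψ (TT Ψ 0 f) 1 (by
      unfold TT; exact reproΨ hψ hΨ 0 f) hp hpr hr
    refine this.trans ?_
    rw [← hδ, ← hb, hc1, Nat.cast_one, one_mul]
    gcongr
    exact le_self_add
  have h1 : ∀ a : ℕ, eLpNorm (TT ψ₀ a f) r volume ≤ c2 * ρ ^ a * bs ψ₀ Ψ s p q f := by
    intro a
    have := bernstein_ineq Ψ (TT ψ₀ a f) (a+2) (by
      unfold TT; push_cast; exact repro hψ hΨ a f) hp hpr hr
    refine this.trans ?_
    rw [← hδ, ← hb, hc2]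
    calc _ ≤ b * ENNReal.ofReal ((2:ℝ) ^ (((a+2:ℕ):ℝ) * δ)) *
          (ENNReal.ofReal ((2:ℝ) ^ (-((a:ℝ) * s))) * bs ψ₀ Ψ s p q f) := by
          gcongr
          refine (block_le s hq f a).trans ?_
          gcongr
          exact blk_le_bs s hq f a
      _ = _ := by
          have key : ENNReal.ofReal ((2:ℝ) ^ (((a+2:ℕ):ℝ) * δ)) * ENNReal.ofReal ((2:ℝ) ^ (-((a:ℝ) * s))) =
              ENNReal.ofReal ((2:ℝ) ^ (2 * δ)) * ρ ^ a := by
            rw [hρ, ← ENNReal.ofReal_pow (by positivity), ← Real.rpow_natCast,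
              ← Real.rpow_mul (by norm_num), ← ENNReal.ofReal_mul (by positivity),
              ← ENNReal.ofReal_mul (by positivity), ← Real.rpow_add (by norm_num),
              ← Real.rpow_add (by norm_num)]
            congr 2
            push_cast; ring
          rw [mul_assoc b, ← mul_assoc (ENNReal.ofReal _) (ENNReal.ofReal _), key]
          ring
  have h2 : ∀ m : ℕ, eLpNorm (TT Ψ m f) r volume ≤
      (c1 + c2 * ∑ a ∈ Finset.range m, ρ ^ a) * bs ψ₀ Ψ s p q f := by
    intro m
    induction m with
    | zero => simpa using h0
    | succ m ih =>
      rw [TT_succ hψ hΨ]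
      refine (eLpNorm_add_S _ _ (hp.trans hpr)).trans ?_
      refine (add_le_add ih (h1 m)).trans (le_of_eq ?_)
      rw [Finset.sum_range_succ]; ring
  intro m
  refine (h2 m).trans ?_
  gcongr
  exact ENNReal.sum_le_tsum _

lemma ml_tele (F f G g : SchwartzMap (Rn n) ℝ) :
    ml (F + f) (G + g) = ml F G + (ml f (G + g) + ml g F) := by
  ext x; simp [ml_apply]; ring

lemma decomp (hψ : IsLPF n ψ₀) (hΨ : IsLowPiece ψ₀ Ψ) {p r pb : ℝ≥0∞} [ENNReal.HolderTriple p r pb]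
    (hpb : 1 ≤ pb) (hpb' : pb < ∞) (K f g : SchwartzMap (Rn n) ℝ) (Xf Xg : ℝ≥0∞)
    (hXf : ∀ m, eLpNorm (TT Ψ m f) r volume ≤ Xf) (hXg : ∀ m, eLpNorm (TT Ψ m g) r volume ≤ Xg)
    (m₀ : ℕ) :
    eLpNorm (cv K (ml f g)) pb volume ≤
      eLpNorm (cv K (ml (TT Ψ m₀ f) (TT Ψ m₀ g))) pb volume +
      WW K * ∑' i : ℕ, (Xg * eLpNorm (TT ψ₀ (m₀ + i) f) p volume +
        Xf * eLpNorm (TT ψ₀ (m₀ + i) g) p volume) := by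
  have h1 : ∀ i : ℕ, eLpNorm (cv K (ml (TT Ψ (m₀ + i) f) (TT Ψ (m₀ + i) g))) pb volume ≤
      eLpNorm (cv K (ml (TT Ψ m₀ f) (TT Ψ m₀ g))) pb volume +
      WW K * ∑ i ∈ Finset.range i, (Xg * eLpNorm (TT ψ₀ (m₀ + i) f) p volume +
        Xf * eLpNorm (TT ψ₀ (m₀ + i) g) p volume) := by
    intro i
    induction i with
    | zero => simp
    | succ i ih =>
      rw [← add_assoc, TT_succ hψ hΨ, TT_succ hψ hΨ, ml_tele, cv_add]
      refine (eLpNorm_add_S _ _ hpb).trans ?_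
      rw [Finset.sum_range_succ, mul_add (WW K), ← add_assoc]
      refine add_le_add ih ?_
      refine (young _ _ hpb hpb').trans ?_
      gcongr
      refine (eLpNorm_add_S _ _ hpb).trans ?_
      gcongr
      · rw [← TT_succ hψ hΨ, mul_comm Xg]
        refine (holder (p := p) (r := r) _ _).trans ?_
        gcongr
        exact hXg _
      · rw [mul_comm Xf]
        refine (holder (p := p) (r := r) _ _).trans ?_
        gcongr
        exact hXf _
  have hlim := Lp.eLpNorm_lim_le_liminf_eLpNorm (p := pb) (μ := (volume : Measure (Rn n)))
    (f := fun i : ℕ => (cv K (ml (TT Ψ (m₀ + i) f) (TT Ψ (m₀ + i) g)) : Rn n → ℝ))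
    (fun i => (SchwartzMap.continuous _).aestronglyMeasurable) (cv K (ml f g)) (by
      filter_upwards with x
      have := cvT_tendsto hψ hΨ K f g x
      have h2 : Tendsto (fun i : ℕ => m₀ + i) atTop atTop := tendsto_atTop_mono (fun i => Nat.le_add_left i m₀) tendsto_id
      exact this.comp h2)
  refine hlim.trans ?_
  refine liminf_le_of_le (by isBoundedDefault) ?_
  intro b hb
  obtain ⟨i, hi⟩ := hb.exists
  refine hi.trans ((h1 i).trans ?_)
  gcongr
  exact ENNReal.sum_le_tsum _

lemma tsum_w_le (s : ℝ) {p q : ℝ≥0∞} (f : SchwartzMap (Rn n) ℝ) (j : ℕ) (hs : 0 ≤ s) :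
    ENNReal.ofReal ((2:ℝ) ^ ((j:ℝ) * s)) * ∑' i : ℕ, eLpNorm (TT ψ₀ (j - 2 + i) f) p volume ≤
    ENNReal.ofReal ((2:ℝ) ^ (2 * s)) *
      ∑' i : ℕ, ENNReal.ofReal ((2:ℝ) ^ (-s)) ^ i * blk ψ₀ s p f (j - 2 + i) := by
  rw [← ENNReal.tsum_mul_left, ← ENNReal.tsum_mul_left]
  apply ENNReal.tsum_le_tsum
  intro i
  unfold blk
  rw [← ENNReal.ofReal_pow (by positivity), ← Real.rpow_natCast, ← Real.rpow_mul (by norm_num),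
    ← mul_assoc, ← mul_assoc, ← ENNReal.ofReal_mul (by positivity), ← ENNReal.ofReal_mul (by positivity),
    ← Real.rpow_add (by norm_num), ← Real.rpow_add (by norm_num)]
  gcongr
  · norm_num
  · have : (j:ℝ) ≤ ((j - 2 : ℕ):ℝ) + 2 := by
      have : j ≤ (j - 2) + 2 := by omega
      exact_mod_cast this
    push_cast
    nlinarith

lemma main_est (hψ : IsLPF n ψ₀) (hΨ : IsLowPiece ψ₀ Ψ) {p q r pb : ℝ≥0∞}
    [ENNReal.HolderTriple p r pb] (s : ℝ) (hs0 : 0 < s) (hq : 1 ≤ q)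
    (hp : 1 ≤ p) (hpr : p ≤ r) (hr : r < ∞) (hpb : 1 ≤ pb) (hpb' : pb < ∞)
    (hs : (n:ℝ) * (1 / p.toReal - 1 / r.toReal) < s) (e : Rn n) :
    ∃ C : ℝ≥0∞, C ≠ ∞ ∧ ∀ f g : SchwartzMap (Rn n) ℝ,
      bs ψ₀ Ψ (s - 1) pb q (∂_{e} (ml f g)) ≤ C * (bs ψ₀ Ψ s p q f * bs ψ₀ Ψ s p q g) := by
  obtain ⟨CX, hCX, hX⟩ := T_r_bound hψ hΨ s hq hp hpr hr hs
  set ρ := ENNReal.ofReal ((2:ℝ) ^ (-s)) with hρ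
  have hρ1 : ρ < 1 := by
    rw [hρ, ENNReal.ofReal_lt_one]
    exact Real.rpow_lt_one_of_one_lt_of_neg (by norm_num) (by linarith)
  have hΩ : ∑' a : ℕ, ρ ^ a ≠ ∞ := by
    rw [ENNReal.tsum_geometric]
    exact ENNReal.inv_ne_top.2 (tsub_pos_of_lt hρ1).ne'
  set Ω := ∑' a : ℕ, ρ ^ a with hΩd
  set E := ENNReal.ofReal ((2:ℝ) ^ (2 * s)) with hE
  set V := WW (∂_{e} Ψ) with hV
  set W := WW (∂_{e} ψ₀) with hW
  refine ⟨V * (CX + 2 * (CX * (E * (3 * Ω)))) + W * (E * (2 * CX) + 2 * (CX * (E * (3 * Ω)))), ?_, ?_⟩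
  · have hV' : V ≠ ∞ := (WW_lt_top _).ne
    have hW' : W ≠ ∞ := (WW_lt_top _).ne
    have hE' : E ≠ ∞ := ENNReal.ofReal_ne_top
    clear_value V W E Ω
    finiteness
  intro f g
  set F := bs ψ₀ Ψ s p q f with hF
  set G := bs ψ₀ Ψ s p q g with hG
  -- shifted sums
  have hSf : lq q (fun j => ∑' i : ℕ, ρ ^ i * blk ψ₀ s p f (j - 2 + i)) ≤ 3 * Ω * F :=
    (lq_shift hq _ _ hΩ).trans (by gcongr; exact le_add_self)
  have hSg : lq q (fun j => ∑' i : ℕ, ρ ^ i * blk ψ₀ s p g (j - 2 + i)) ≤ 3 * Ω * G :=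
    (lq_shift hq _ _ hΩ).trans (by gcongr; exact le_add_self)
  set Sf : ℕ → ℝ≥0∞ := fun j => ∑' i : ℕ, ρ ^ i * blk ψ₀ s p f (j - 2 + i) with hSfd
  set Sg : ℕ → ℝ≥0∞ := fun j => ∑' i : ℕ, ρ ^ i * blk ψ₀ s p g (j - 2 + i) with hSgd
  -- main decomposition
  have hD : ∀ (K : SchwartzMap (Rn n) ℝ) (j : ℕ),
      ENNReal.ofReal ((2:ℝ) ^ ((j:ℝ) * s)) * eLpNorm (cv K (ml f g)) pb volume ≤
      ENNReal.ofReal ((2:ℝ) ^ ((j:ℝ) * s)) *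
        eLpNorm (cv K (ml (TT Ψ (j-2) f) (TT Ψ (j-2) g))) pb volume +
      WW K * (CX * G * (E * Sf j) + CX * F * (E * Sg j)) := by
    intro K j
    have h1 := decomp hψ hΨ (p := p) (r := r) hpb hpb' K f g (CX * F) (CX * G) (hX f) (hX g) (j-2)
    rw [ENNReal.tsum_add, ENNReal.tsum_mul_left, ENNReal.tsum_mul_left] at h1
    refine (mul_le_mul' le_rfl h1).trans ?_
    calc _ = ENNReal.ofReal ((2:ℝ) ^ ((j:ℝ) * s)) *
        eLpNorm (cv K (ml (TT Ψ (j-2) f) (TT Ψ (j-2) g))) pb volume +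
          WW K * (CX * G * (ENNReal.ofReal ((2:ℝ) ^ ((j:ℝ) * s)) *
            ∑' i : ℕ, eLpNorm (TT ψ₀ (j - 2 + i) f) p volume) +
            CX * F * (ENNReal.ofReal ((2:ℝ) ^ ((j:ℝ) * s)) *
            ∑' i : ℕ, eLpNorm (TT ψ₀ (j - 2 + i) g) p volume)) := by ring
      _ ≤ _ := by
        refine add_le_add le_rfl (mul_le_mul' le_rfl (add_le_add (mul_le_mul' le_rfl ?_)
          (mul_le_mul' le_rfl ?_)))
        · exact tsum_w_le (q := q) s f j hs0.le
        · exact tsum_w_le (q := q) s g j hs0.le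
  have hlow : ∀ K : SchwartzMap (Rn n) ℝ, eLpNorm (cv K (ml (TT Ψ 0 f) (TT Ψ 0 g))) pb volume ≤
      WW K * (CX * (F * G)) := by
    intro K
    refine (young _ _ hpb hpb').trans ?_
    gcongr
    refine (holder (p := p) (r := r) _ _).trans ?_
    calc _ ≤ F * (CX * G) := by
          gcongr
          · exact le_self_add
          · exact hX g 0
      _ = _ := by ring
  -- the low frequency part
  have hA : eLpNorm (TT Ψ 0 (∂_{e} (ml f g))) pb volume ≤
      V * (CX + 2 * (CX * (E * (3 * Ω)))) * (F * G) := by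
    have e1 : TT Ψ 0 (∂_{e} (ml f g)) = cv (∂_{e} Ψ) (ml f g) := by
      unfold TT; rw [Nat.cast_zero, dil_zero, cv_pd]
    rw [e1]
    have h1 := hD (∂_{e} Ψ) 0
    simp only [Nat.cast_zero, zero_mul, Real.rpow_zero, ENNReal.ofReal_one, one_mul] at h1
    refine h1.trans ?_
    have h2 : Sf 0 ≤ 3 * Ω * F := (le_lq hq Sf 0).trans hSf
    have h3 : Sg 0 ≤ 3 * Ω * G := (le_lq hq Sg 0).trans hSg
    calc _ ≤ V * (CX * (F * G)) + V * (CX * G * (E * (3 * Ω * F)) + CX * F * (E * (3 * Ω * G))) := by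
          gcongr
          exact hlow _
      _ = _ := by ring
  have hB : lq q (blk ψ₀ (s-1) pb (∂_{e} (ml f g))) ≤
      W * (E * (2 * CX) + 2 * (CX * (E * (3 * Ω)))) * (F * G) := by
    have hpt : ∀ j : ℕ, blk ψ₀ (s-1) pb (∂_{e} (ml f g)) j ≤
        (W * E) * (if j < 2 then CX * (F * G) else 0) +
          ((W * CX * G * E) * Sf j + (W * CX * F * E) * Sg j) := by
      intro j
      have e1 : TT ψ₀ j (∂_{e} (ml f g)) = (2:ℝ) ^ (j:ℤ) • cv (dil (∂_{e} ψ₀) j) (ml f g) := by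
        unfold TT
        rw [cv_pd, pd_dil]
        ext x
        rw [SchwartzMap.smul_apply, cv_apply, cv_apply]
        unfold MeasureTheory.convolution
        rw [← integral_smul]
        congr 1; ext t; simp [mul_assoc]
      have e2 : blk ψ₀ (s-1) pb (∂_{e} (ml f g)) j = ENNReal.ofReal ((2:ℝ) ^ ((j:ℝ) * s)) *
          eLpNorm (cv (dil (∂_{e} ψ₀) j) (ml f g)) pb volume := by
        unfold blk
        rw [e1, FunLike.coe_smul, eLpNorm_const_smul, ← ofReal_norm, ← mul_assoc,
          ← ENNReal.ofReal_mul (by positivity), Real.norm_of_nonneg (by positivity), zpow_natCast,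
          ← Real.rpow_natCast, ← Real.rpow_add (by norm_num)]
        congr 3; ring
      rw [e2]
      refine (hD _ j).trans ?_
      rw [WW_dil, ← hW]
      have e3 : W * (CX * G * (E * Sf j) + CX * F * (E * Sg j)) =
        (W * CX * G * E) * Sf j + (W * CX * F * E) * Sg j := by ring
      rw [e3]
      refine add_le_add ?_ le_rfl
      split_ifs with hj
      · have hj2 : j - 2 = 0 := by omega
        rw [hj2]
        calc _ ≤ E * (W * (CX * (F * G))) := by
              gcongr
              · rw [hE]
                apply ENNReal.ofReal_le_ofReal
                apply Real.rpow_le_rpow_of_exponent_le (by norm_num)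
                have : (j:ℝ) ≤ 2 := by exact_mod_cast hj.le
                gcongr
              · refine (hlow _).trans (le_of_eq ?_)
                rw [WW_dil]
          _ = _ := by ring
      · have e4 : cv (dil (∂_{e} ψ₀) (j:ℤ)) (ml (TT Ψ (j-2) f) (TT Ψ (j-2) g)) = 0 := by
          have : (j:ℤ) = ((j-2:ℕ):ℤ) + 2 := by omega
          rw [this]
          exact vanish hψ hΨ _ f g e
        rw [e4, FunLike.coe_zero, eLpNorm_zero]; simp
    refine (lq_mono hpt).trans ?_
    refine (lq_add hq _ _).trans ?_
    refine (add_le_add le_rfl (lq_add hq _ _)).trans ?_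
    rw [lq_const_mul hq, lq_const_mul hq, lq_const_mul hq]
    calc _ ≤ W * E * (2 * (CX * (F * G))) + (W * CX * G * E * (3 * Ω * F) + W * CX * F * E * (3 * Ω * G)) := by
          gcongr
          exact lq_ind hq _
      _ = _ := by ring
  calc bs ψ₀ Ψ (s - 1) pb q (∂_{e} (ml f g)) ≤ _ := add_le_add hA hB
    _ = _ := by ring

end core

def compo (u : SchwartzMap (Rn n) (Rn n)) (j : Fin n) : SchwartzMap (Rn n) ℝ :=
  SchwartzMap.postcompCLM (EuclideanSpace.proj j : Rn n →L[ℝ] ℝ) u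

lemma compo_apply (u : SchwartzMap (Rn n) (Rn n)) (j : Fin n) (x : Rn n) : compo u j x = u x j := rfl

lemma sum_coe_S {ι : Type*} (t : Finset ι) (f : ι → SchwartzMap (Rn n) ℝ) (x : Rn n) :
    (∑ i ∈ t, f i) x = ∑ i ∈ t, f i x := by
  classical
  induction t using Finset.induction_on with
  | empty => simp
  | insert a t ha ih => rw [Finset.sum_insert ha, Finset.sum_insert ha, ← ih]; rfl

lemma div_coe (u v : SchwartzMap (Rn n) (Rn n)) (j : Fin n) :
    (fun x => ∑ k : Fin n, pderiv' k (fun y => u y j * v y k) x) =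
      ((∑ k : Fin n, ∂_{(EuclideanSpace.single k (1:ℝ) : Rn n)} (ml (compo u j) (compo v k)) :
        SchwartzMap (Rn n) ℝ) : Rn n → ℝ) := by
  ext x
  rw [sum_coe_S]
  refine Finset.sum_congr rfl fun k _ => ?_
  rw [lineDerivOp_apply_eq_fderiv]
  unfold pderiv'
  congr 2

/-- Bilinear estimate for `div(u ⊗ v)`: for `s > 1`, `q ∈ [1,∞]`,
`p, p̄ ∈ (1,∞)` with `p̄ < p ≤ 2p̄` and `s > n(2/p − 1/p̄)`,
`‖div(u ⊗ v)‖_{B^{s−1}_{p̄,q}} ≤ C ‖u‖_{B^s_{p,q}} ‖v‖_{B^s_{p,q}}`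
(Besov norms of vector fields being sums of componentwise norms). -/
theorem besov_div_tensor_estimate
    (n : ℕ) (hn : 1 ≤ n) (ψ₀ Ψ : SchwartzMap (Rn n) ℝ)
    (hψ : IsLPF n ψ₀) (hΨ : IsLowPiece ψ₀ Ψ)
    (s : ℝ) (hs : 1 < s) (q : ℝ≥0∞) (hq : 1 ≤ q)
    (p pb : ℝ≥0∞) (hp : 1 < p) (hp' : p < ∞) (hpb : 1 < pb) (hpb' : pb < ∞)
    (hpbp : pb < p) (hp2pb : p ≤ 2 * pb)
    (hsn : (n:ℝ) * (2 / p.toReal - 1 / pb.toReal) < s) :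
    ∃ C : ℝ, 0 < C ∧ ∀ u v : SchwartzMap (Rn n) (Rn n),
      (∑ j : Fin n, besovNorm ψ₀ Ψ (s - 1) pb q
          (fun x => ∑ k : Fin n, pderiv' k (fun y => u y j * v y k) x))
        ≤ ENNReal.ofReal C *
          ((∑ j : Fin n, besovNorm ψ₀ Ψ s p q (fun x => u x j)) *
           (∑ j : Fin n, besovNorm ψ₀ Ψ s p q (fun x => v x j))) := by
  set r : ℝ≥0∞ := (pb⁻¹ - p⁻¹)⁻¹ with hr
  have hinv : p⁻¹ < pb⁻¹ := ENNReal.inv_lt_inv.2 hpbp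
  have hsum : p⁻¹ + r⁻¹ = pb⁻¹ := by
    rw [hr, inv_inv]; exact add_tsub_cancel_of_le hinv.le
  haveI : ENNReal.HolderTriple p r pb := ⟨hsum⟩
  have hrt : r < ∞ := by
    rw [hr, ENNReal.inv_lt_top]; exact tsub_pos_of_lt hinv
  have hpbinv : pb⁻¹ ≠ ∞ := ENNReal.inv_ne_top.2 (zero_lt_one.trans hpb).ne'
  have hpr : p ≤ r := by
    rw [hr, ← ENNReal.inv_le_inv, inv_inv, tsub_le_iff_right, ← two_mul]
    have h2 : (2 * pb)⁻¹ ≤ p⁻¹ := ENNReal.inv_le_inv.2 hp2pb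
    rw [ENNReal.mul_inv (Or.inl (by norm_num)) (Or.inl (by norm_num))] at h2
    calc pb⁻¹ = 2 * (2⁻¹ * pb⁻¹) := by
          rw [← mul_assoc, ENNReal.mul_inv_cancel (by norm_num) (by norm_num), one_mul]
      _ ≤ 2 * p⁻¹ := by gcongr
  have hreal : p.toReal⁻¹ + r.toReal⁻¹ = pb.toReal⁻¹ := by
    rw [← ENNReal.toReal_inv, ← ENNReal.toReal_inv, ← ENNReal.toReal_inv, ← hsum,
      ENNReal.toReal_add]
    · exact ENNReal.inv_ne_top.2 (zero_lt_one.trans hp).ne'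
    · exact ENNReal.inv_ne_top.2 ((zero_lt_one.trans hp).trans_le hpr).ne'
  have hs' : (n:ℝ) * (1 / p.toReal - 1 / r.toReal) < s := by
    have : 1 / p.toReal - 1 / r.toReal = 2 / p.toReal - 1 / pb.toReal := by
      simp only [one_div, div_eq_mul_inv]; linarith
    rw [this]; exact hsn
  choose Ck hCk hest using fun k : Fin n => main_est hψ hΨ (q := q) (r := r) (pb := pb) s
    (by linarith) hq hp.le hpr hrt hpb.le hpb' hs' (EuclideanSpace.single k (1:ℝ) : Rn n)
  have hCs : ∑ k, Ck k ≠ ∞ := ENNReal.sum_ne_top.2 fun k _ => hCk k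
  refine ⟨(∑ k, Ck k).toReal + 1, by positivity, ?_⟩
  intro u v
  have hu : ∀ j, besovNorm ψ₀ Ψ s p q (fun x => u x j) = bs ψ₀ Ψ s p q (compo u j) := fun j =>
    besov_eq_bs ψ₀ Ψ s p q (compo u j)
  have hv : ∀ j, besovNorm ψ₀ Ψ s p q (fun x => v x j) = bs ψ₀ Ψ s p q (compo v j) := fun j =>
    besov_eq_bs ψ₀ Ψ s p q (compo v j)
  simp only [hu, hv, div_coe, besov_eq_bs]
  have hC : ∀ k, Ck k ≤ ENNReal.ofReal ((∑ k, Ck k).toReal + 1) := by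
    intro k
    refine (Finset.single_le_sum (f := Ck) (fun _ _ => zero_le) (Finset.mem_univ k)).trans ?_
    rw [← ENNReal.ofReal_toReal hCs, ENNReal.toReal_ofReal ENNReal.toReal_nonneg]
    exact ENNReal.ofReal_le_ofReal (by linarith)
  rw [Finset.sum_mul_sum, Finset.mul_sum]
  refine Finset.sum_le_sum fun j _ => ?_
  rw [Finset.mul_sum]
  refine (bs_sum (s-1) hpb.le hq _ _).trans (Finset.sum_le_sum fun k _ => ?_)
  exact (hest k _ _).trans (mul_le_mul' (hC k) le_rfl)
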